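/- arXiv:2401.03636 — 2 statements merged into one kernel-verified Lean document; each statement's English description precedes it below -/
import Mathlib

section
/- Under the stated assumptions, the value function f*(x) := min_{y∈Y} f(x,y) is differentiable on X; moreover, for each x ∈ X the set {∇_x f(x,y) : y ∈ S(x)} is a singleton, and ∇f*(x) = ∇_x f(x, y₁*) for any y₁* ∈ S(x). -/
open scoped RealInnerProductSpace

noncomputable section

abbrev Eu (n : ℕ) : Type := EuclideanSpace ℝ (Fin n)

variable {n m : ℕ}

/-- Partial gradient of `f` in the first variable. -/
def gradx (f : Eu n → Eu m → ℝ) (x : Eu n) (y : Eu m) : Eu n :=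
  gradient (fun x' => f x' y) x

/-- Partial gradient of `f` in the second variable. -/
def grady (f : Eu n → Eu m → ℝ) (x : Eu n) (y : Eu m) : Eu m :=
  gradient (fun y' => f x y') y

/-- Derivative in `x` of the partial gradient in `y` (`∇_{yx} f`). -/
def gradyx (f : Eu n → Eu m → ℝ) (x : Eu n) (y : Eu m) : Eu n →L[ℝ] Eu m :=
  fderiv ℝ (fun x' => grady f x' y) x

/-- Derivative in `y` of the partial gradient in `y` (`∇_{yy} f`). -/
def gradyy (f : Eu n → Eu m → ℝ) (x : Eu n) (y : Eu m) : Eu m →L[ℝ] Eu m :=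
  fderiv ℝ (fun y' => grady f x y') y

/-- The ℓ² norm of a pair of vectors. -/
def pnorm (a : Eu n) (b : Eu m) : ℝ := Real.sqrt (‖a‖ ^ 2 + ‖b‖ ^ 2)

/-- Lower-level value function `f*`. -/
def fstar (f : Eu n → Eu m → ℝ) (Y : Set (Eu m)) (x : Eu n) : ℝ :=
  sInf ((fun y => f x y) '' Y)

/-- Lower-level solution set `S(x)`. -/
def Sopt (f : Eu n → Eu m → ℝ) (Y : Set (Eu m)) (x : Eu n) : Set (Eu m) :=
  {y ∈ Y | ∀ y' ∈ Y, f x y ≤ f x y'}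

/-- Set of ε-optimal lower-level points `S_ε(x)`. -/
def Seps (f : Eu n → Eu m → ℝ) (Y : Set (Eu m)) (ε : ℝ) (x : Eu n) : Set (Eu m) :=
  {y ∈ Y | f x y ≤ fstar f Y x + ε}

/-- Pessimistic value function `φ_ε(x) = max_{y ∈ S_ε(x)} F(x,y)`. -/
def phieps (F f : Eu n → Eu m → ℝ) (Y : Set (Eu m)) (ε : ℝ) (x : Eu n) : ℝ :=
  sSup ((fun y => F x y) '' (Seps f Y ε x))

/-- `R_ε(x) = argmax_{y ∈ S_ε(x)} F(x,y)`. -/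
def Reps (F f : Eu n → Eu m → ℝ) (Y : Set (Eu m)) (ε : ℝ) (x : Eu n) : Set (Eu m) :=
  {y ∈ Seps f Y ε x | ∀ y' ∈ Seps f Y ε x, F x y' ≤ F x y}

/-- Gradient descent iterates `y_j(x)` for the lower-level problem (stepsize `1/L₁`). -/
def yIter (f : Eu n → Eu m → ℝ) (L₁ : ℝ) (y₀ : Eu m) : ℕ → Eu n → Eu m
  | 0, _ => y₀
  | j + 1, x => yIter f L₁ y₀ j x - (1 / L₁) • grady f x (yIter f L₁ y₀ j x)

/-- Approximate lower-level value `f_J(x) = f(x, y_J(x))`. -/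
def fApp (f : Eu n → Eu m → ℝ) (L₁ : ℝ) (y₀ : Eu m) (J : ℕ) (x : Eu n) : ℝ :=
  f x (yIter f L₁ y₀ J x)

/-- Log-barrier objective `G_{ε,τ,J}`. -/
def Gfun (F f : Eu n → Eu m → ℝ) (L₁ : ℝ) (y₀ : Eu m) (ε τ : ℝ) (J : ℕ)
    (x : Eu n) (y : Eu m) : ℝ :=
  F x y + τ * Real.log (fApp f L₁ y₀ J x + ε - f x y)

/-- The set `Y_J = ∩_{z ∈ X} {y ∈ Y : f_J(z) + ε - f(z,y) ≥ c}`. -/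
def YJ (f : Eu n → Eu m → ℝ) (L₁ : ℝ) (y₀ : Eu m) (ε c : ℝ) (J : ℕ)
    (X : Set (Eu n)) (Y : Set (Eu m)) : Set (Eu m) :=
  {y ∈ Y | ∀ z ∈ X, fApp f L₁ y₀ J z + ε - f z y ≥ c}

/-- The set `Y_J(x) = {y ∈ Y : f_J(x) + ε - f(x,y) ≥ c/2}`. -/
def YJx (f : Eu n → Eu m → ℝ) (L₁ : ℝ) (y₀ : Eu m) (ε c : ℝ) (J : ℕ)
    (x : Eu n) (Y : Set (Eu m)) : Set (Eu m) :=
  {y ∈ Y | fApp f L₁ y₀ J x + ε - f x y ≥ c / 2}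


theorem aux_hasFDerivAt_of_convex {E : Type*} [NormedAddCommGroup E] [NormedSpace ℝ E]
    {C : Set E} (hC : IsOpen C) {φ ψ : E → ℝ} (hφ : ConvexOn ℝ C φ) {x : E} (hx : x ∈ C)
    (hle : ∀ z ∈ C, φ z ≤ ψ z) (heq : φ x = ψ x) {L : E →L[ℝ] ℝ} (hψ : HasFDerivAt ψ L x) :
    HasFDerivAt φ L x := by
  rw [hasFDerivAt_iff_isLittleO_nhds_zero] at hψ ⊢
  rw [Asymptotics.isLittleO_iff] at hψ ⊢
  intro c hc
  have h1 := hψ hc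
  have t1 : Filter.Tendsto (fun h : E => -h) (nhds 0) (nhds 0) := by
    simpa using (continuous_neg (G := E)).tendsto 0
  have h2 := t1.eventually h1
  have h3 : ∀ᶠ h in nhds (0 : E), x + h ∈ C := by
    have : Filter.Tendsto (fun h : E => x + h) (nhds 0) (nhds x) := by
      simpa using (continuous_add_left x).tendsto 0
    exact this.eventually (hC.mem_nhds hx)
  have h4 := t1.eventually h3
  filter_upwards [h1, h2, h3, h4] with h a1 a2 a3 a4
  have b1 := hle _ a3
  have b2 := hle _ a4
  have b3 := hφ.2 a3 a4 (by norm_num : (0:ℝ) ≤ 1/2) (by norm_num : (0:ℝ) ≤ 1/2) (by norm_num)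
  have e : (1/2 : ℝ) • (x + h) + (1/2 : ℝ) • (x + -h) = x := by module
  rw [e] at b3
  simp only [smul_eq_mul] at b3
  rw [Real.norm_eq_abs, abs_le] at a1 a2 ⊢
  rw [norm_neg, map_neg] at a2
  constructor <;> linarith [a1.1, a1.2, a2.1, a2.2]

theorem aux_fstar_eq {n m : ℕ} {f : Eu n → Eu m → ℝ} {Y : Set (Eu m)} {x : Eu n} {y : Eu m}
    (hy : y ∈ Sopt f Y x) : fstar f Y x = f x y := by
  have : IsLeast ((fun y => f x y) '' Y) (f x y) :=
    ⟨⟨y, hy.1, rfl⟩, by rintro _ ⟨z, hz, rfl⟩; exact hy.2 z hz⟩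
  exact this.csInf_eq

theorem aux_all {n m : ℕ} (C : Set (Eu n)) (Y : Set (Eu m))
    (f : Eu n → Eu m → ℝ)
    (hYne : Y.Nonempty) (hYcomp : IsCompact Y)
    (hCopen : IsOpen C) (hCconv : Convex ℝ C)
    (hfC2 : ContDiffOn ℝ 2 (fun p : Eu n × Eu m => f p.1 p.2) (C ×ˢ Y))
    (hfconv : ConvexOn ℝ (C ×ˢ Y) (fun p : Eu n × Eu m => f p.1 p.2)) :
    (∀ x ∈ C, (Sopt f Y x).Nonempty) ∧ ∀ x ∈ C, ∀ y ∈ Sopt f Y x,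
      HasFDerivAt (fstar f Y) (fderiv ℝ (fun x' => f x' y) x) x := by
  have hne : ∀ x ∈ C, (Sopt f Y x).Nonempty := by
    intro x hx
    have hc : ContinuousOn (fun y => f x y) Y :=
      hfC2.continuousOn.comp (f := fun y : Eu m => (x, y)) (by fun_prop) (fun y hy => ⟨hx, hy⟩)
    obtain ⟨y, hy, hmin⟩ := hYcomp.exists_isMinOn hYne hc
    exact ⟨y, hy, fun z hz => hmin hz⟩
  have hle : ∀ x ∈ C, ∀ y ∈ Y, fstar f Y x ≤ f x y := by
    intro x hx y hy
    obtain ⟨z, hz⟩ := hne x hx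
    rw [aux_fstar_eq hz]
    exact hz.2 y hy
  have hconv : ConvexOn ℝ C (fstar f Y) := by
    refine ⟨hCconv, ?_⟩
    intro x hx z hz a b ha hb hab
    obtain ⟨u, hu⟩ := hne x hx
    obtain ⟨v, hv⟩ := hne z hz
    rw [aux_fstar_eq hu, aux_fstar_eq hv]
    have hp : ((x, u) : Eu n × Eu m) ∈ C ×ˢ Y := ⟨hx, hu.1⟩
    have hq : ((z, v) : Eu n × Eu m) ∈ C ×ˢ Y := ⟨hz, hv.1⟩
    have hm := hfconv.1 hp hq ha hb hab
    exact (hle _ hm.1 _ hm.2).trans (hfconv.2 hp hq ha hb hab)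
  refine ⟨hne, fun x hx y hy => ?_⟩
  refine aux_hasFDerivAt_of_convex (ψ := fun x' => f x' y) hCopen hconv hx
    (fun z hz => hle z hz y hy.1) (aux_fstar_eq hy) ?_
  have hd : DifferentiableOn ℝ (fun x' => f x' y) C :=
    (hfC2.differentiableOn (by norm_num)).comp (f := fun x' : Eu n => (x', y)) (by fun_prop)
      (fun z hz => ⟨hz, hy.1⟩)
  exact (hd.differentiableAt (hCopen.mem_nhds hx)).hasFDerivAt

/-- Proposition 1: under Assumptions 1 and 2, the lower-level value
function `f*` is differentiable on `X`; moreover for each `x ∈ X` the set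
`{∇ₓ f(x,y) : y ∈ S(x)}` is the singleton `{∇ f*(x)}`, i.e. `∇ f*(x) = ∇ₓ f(x, y₁*)`
for every `y₁* ∈ S(x)`. -/
theorem stmt0 {n m : ℕ} (X C : Set (Eu n)) (Y : Set (Eu m)) (H M μ : ℝ)
    (F f : Eu n → Eu m → ℝ)
    (hXne : X.Nonempty) (hXconv : Convex ℝ X) (hXcomp : IsCompact X)
    (hYne : Y.Nonempty) (hYconv : Convex ℝ Y) (hYcomp : IsCompact Y)
    (hH : 0 < H) (hM : 1 < M)
    (hXbd : ∀ x ∈ X, ‖x‖ ≤ H) (hYbd : ∀ y ∈ Y, ‖y‖ ≤ M)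
    (hXC : X ⊆ C) (hCopen : IsOpen C) (hCconv : Convex ℝ C)
    (hFC2 : ContDiffOn ℝ 2 (fun p : Eu n × Eu m => F p.1 p.2) (C ×ˢ Y))
    (hfC2 : ContDiffOn ℝ 2 (fun p : Eu n × Eu m => f p.1 p.2) (C ×ˢ Y))
    (hμ : 0 < μ) (hFconc : ∀ x ∈ X, StrongConcaveOn Y μ (F x))
    (hfconv : ConvexOn ℝ (C ×ˢ Y) (fun p : Eu n × Eu m => f p.1 p.2)) :
    DifferentiableOn ℝ (fstar f Y) X ∧
      ∀ x ∈ X, (fun y => gradx f x y) '' (Sopt f Y x) = {gradient (fstar f Y) x} := by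
  obtain ⟨hne, hder⟩ := aux_all C Y f hYne hYcomp hCopen hCconv hfC2 hfconv
  have key : ∀ x ∈ X, ∀ y ∈ Sopt f Y x, gradx f x y = gradient (fstar f Y) x := by
    intro x hx y hy
    unfold gradx gradient
    rw [(hder x (hXC hx) y hy).fderiv]
  refine ⟨?_, fun x hx => ?_⟩
  · intro x hx
    obtain ⟨y, hy⟩ := hne x (hXC hx)
    exact (hder x (hXC hx) y hy).differentiableAt.differentiableWithinAt
  · obtain ⟨y, hy⟩ := hne x (hXC hx)
    ext g
    constructor
    · rintro ⟨z, hz, rfl⟩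
      exact key x hx z hz
    · rintro rfl
      exact ⟨y, hy, key x hx y hy⟩
end
end

section
/- Let x̄ ∈ X. If for every ȳ ∈ R_ε(x̄) the pair (x̄, ȳ) is a local optimal solution of the standard problem SPBPε (min F(x,y) subject to x ∈ X, y ∈ R_ε(x)), then x̄ is a local optimal solution of the perturbed pessimistic bilevel problem PBPε (min_{x∈X} φ_ε(x)). -/
open scoped RealInnerProductSpace

noncomputable section

variable {n m : ℕ}

/-- Continuity transfer along a filter. -/
lemma aux_tendsto {X C : Set (Eu n)} {Y : Set (Eu m)} {g : Eu n → Eu m → ℝ}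
    (hXC : X ⊆ C) (hg : ContinuousOn (fun p : Eu n × Eu m => g p.1 p.2) (C ×ˢ Y))
    {l : Filter (Eu n)} {xb : Eu n} (hxb : xb ∈ X) (hl : l ≤ nhdsWithin xb X)
    {y : Eu n → Eu m} {yb : Eu m} (hyY : ∀ x ∈ X, y x ∈ Y) (hyb : yb ∈ Y)
    (hy : Filter.Tendsto y l (nhds yb)) :
    Filter.Tendsto (fun x => g x (y x)) l (nhds (g xb yb)) := by
  have h1 := hg (xb, yb) ⟨hXC hxb, hyb⟩
  have hX : ∀ᶠ x in l, x ∈ X := hl self_mem_nhdsWithin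
  have h2 : Filter.Tendsto (fun x => (x, y x)) l (nhdsWithin (xb, yb) (C ×ˢ Y)) := by
    refine tendsto_nhdsWithin_iff.2 ⟨?_, ?_⟩
    · exact Filter.Tendsto.prodMk_nhds (hl.trans nhdsWithin_le_nhds) hy
    · filter_upwards [hX] with x hx
      exact ⟨hXC hx, hyY x hx⟩
  exact h1.tendsto.comp h2

/-- Proposition 5(2): if for every `ȳ ∈ R_ε(x̄)` the pair `(x̄, ȳ)` is a
local optimal solution of the standard problem SPBPε, then `x̄` is a local optimal
solution of the perturbed pessimistic bilevel problem PBPε. -/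
theorem stmt2 {n m : ℕ} (X C : Set (Eu n)) (Y : Set (Eu m)) (H M μ ε : ℝ)
    (F f : Eu n → Eu m → ℝ)
    (hXne : X.Nonempty) (hXconv : Convex ℝ X) (hXcomp : IsCompact X)
    (hYne : Y.Nonempty) (hYconv : Convex ℝ Y) (hYcomp : IsCompact Y)
    (hH : 0 < H) (hM : 1 < M)
    (hXbd : ∀ x ∈ X, ‖x‖ ≤ H) (hYbd : ∀ y ∈ Y, ‖y‖ ≤ M)
    (hXC : X ⊆ C) (hCopen : IsOpen C) (hCconv : Convex ℝ C)
    (hFC2 : ContDiffOn ℝ 2 (fun p : Eu n × Eu m => F p.1 p.2) (C ×ˢ Y))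
    (hfC2 : ContDiffOn ℝ 2 (fun p : Eu n × Eu m => f p.1 p.2) (C ×ˢ Y))
    (hμ : 0 < μ) (hFconc : ∀ x ∈ X, StrongConcaveOn Y μ (F x))
    (hfconv : ConvexOn ℝ (C ×ˢ Y) (fun p : Eu n × Eu m => f p.1 p.2))
    (hε : 0 < ε)
    (xbar : Eu n) (hxbar : xbar ∈ X)
    (hlocal : ∀ ybar ∈ Reps F f Y ε xbar,
      IsLocalMinOn (fun p : Eu n × Eu m => F p.1 p.2)
        {p : Eu n × Eu m | p.1 ∈ X ∧ p.2 ∈ Reps F f Y ε p.1} (xbar, ybar)) :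
    IsLocalMinOn (phieps F f Y ε) X xbar := by
  have hFc := hFC2.continuousOn
  have hfc := hfC2.continuousOn
  have slice : ∀ g : Eu n → Eu m → ℝ,
      ContinuousOn (fun p : Eu n × Eu m => g p.1 p.2) (C ×ˢ Y) →
      ∀ x ∈ X, ContinuousOn (g x) Y := by
    intro g hg x hx
    exact hg.comp (f := fun y => (x, y)) (by fun_prop) (fun y hy => ⟨hXC hx, hy⟩)
  -- minimizers of the lower level
  have hmin : ∀ x ∈ X, ∃ z ∈ Y, (∀ y ∈ Y, f x z ≤ f x y) ∧ fstar f Y x = f x z := by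
    intro x hx
    obtain ⟨z, hz, hzm⟩ := hYcomp.exists_isMinOn hYne (slice f hfc x hx)
    refine ⟨z, hz, fun y hy => hzm hy, ?_⟩
    have : IsLeast ((fun y => f x y) '' Y) (f x z) := by
      refine ⟨⟨z, hz, rfl⟩, ?_⟩
      rintro _ ⟨y, hy, rfl⟩
      exact hzm hy
    exact this.csInf_eq
  -- maximizers
  have hmax : ∀ x ∈ X, ∃ y, y ∈ Reps F f Y ε x := by
    intro x hx
    obtain ⟨z, hz, hzm, hzs⟩ := hmin x hx
    have hcl : IsClosed (Seps f Y ε x) :=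
      (slice f hfc x hx).preimage_isClosed_of_isClosed hYcomp.isClosed
        (isClosed_Iic (a := fstar f Y x + ε))
    have hsub : Seps f Y ε x ⊆ Y := fun y hy => hy.1
    have hne : (Seps f Y ε x).Nonempty := ⟨z, hz, by rw [hzs]; linarith⟩
    obtain ⟨y, hy, hym⟩ := (hYcomp.of_isClosed_subset hcl hsub).exists_isMaxOn hne
      ((slice F hFc x hx).mono hsub)
    exact ⟨y, hy, fun y' hy' => hym hy'⟩
  have hphi : ∀ x, ∀ y ∈ Reps F f Y ε x, phieps F f Y ε x = F x y := by
    intro x y hy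
    have : IsGreatest ((fun y => F x y) '' (Seps f Y ε x)) (F x y) := by
      refine ⟨⟨y, hy.1, rfl⟩, ?_⟩
      rintro _ ⟨y', hy', rfl⟩
      exact hy.2 y' hy'
    exact this.csSup_eq
  choose! z hzY hzm hzs using hmin
  choose! y hy using hmax
  have hyY : ∀ x ∈ X, y x ∈ Y := fun x hx => (hy x hx).1.1
  by_contra hcon
  have hfr : ∃ᶠ x in nhdsWithin xbar X, ¬ (phieps F f Y ε xbar ≤ phieps F f Y ε x) :=
    Filter.not_eventually.1 hcon
  have hne : (nhdsWithin xbar X ⊓ Filter.principal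
      {x | ¬ (phieps F f Y ε xbar ≤ phieps F f Y ε x)}).NeBot := Filter.frequently_mem_iff_neBot.1 hfr
  obtain ⟨U, hU0⟩ := Ultrafilter.exists_le
    (nhdsWithin xbar X ⊓ Filter.principal {x | ¬ (phieps F f Y ε xbar ≤ phieps F f Y ε x)})
  have hU : (U : Filter (Eu n)) ≤ nhdsWithin xbar X := hU0.trans inf_le_left
  have hUlt : ∀ᶠ x in (U : Filter (Eu n)), ¬ (phieps F f Y ε xbar ≤ phieps F f Y ε x) :=
    Filter.le_principal_iff.1 (hU0.trans inf_le_right)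
  have hUX : ∀ᶠ x in (U : Filter (Eu n)), x ∈ X := hU self_mem_nhdsWithin
  have conv : ∀ w : Eu n → Eu m, (∀ x ∈ X, w x ∈ Y) →
      ∃ wb ∈ Y, Filter.Tendsto w U (nhds wb) := by
    intro w hw
    exact hYcomp.ultrafilter_le_nhds (U.map w) (by
      rw [Filter.le_principal_iff]
      exact hUX.mono hw)
  obtain ⟨yb, hybY, hyb⟩ := conv y hyY
  obtain ⟨zb, hzbY, hzb⟩ := conv z hzY
  have hfy := aux_tendsto hXC hfc hxbar hU hyY hybY hyb
  have hfz := aux_tendsto hXC hfc hxbar hU hzY hzbY hzb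
  have hFy := aux_tendsto hXC hFc hxbar hU hyY hybY hyb
  have hconst : ∀ g : Eu n → Eu m → ℝ,
      ContinuousOn (fun p : Eu n × Eu m => g p.1 p.2) (C ×ˢ Y) → ∀ w ∈ Y,
      Filter.Tendsto (fun x => g x w) U (nhds (g xbar w)) := fun g hg w hw =>
    aux_tendsto hXC hg hxbar hU (fun _ _ => hw) hw tendsto_const_nhds
  have hybS : yb ∈ Seps f Y ε xbar := by
    refine ⟨hybY, ?_⟩
    rw [hzs xbar hxbar]
    refine le_of_tendsto_of_tendsto hfy
      ((hconst f hfc _ (hzY xbar hxbar)).add_const ε) ?_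
    filter_upwards [hUX] with x hx
    have h1 := (hy x hx).1.2
    rw [hzs x hx] at h1
    have h2 := hzm x hx _ (hzY xbar hxbar)
    linarith
  have hybR : yb ∈ Reps F f Y ε xbar := by
    refine ⟨hybS, fun y' hy' => ?_⟩
    have hfcx : ConvexOn ℝ Y (f xbar) := by
      refine ⟨hYconv, fun a ha b hb s t hs ht hst => ?_⟩
      have := hfconv.2 (show (xbar, a) ∈ C ×ˢ Y from ⟨hXC hxbar, ha⟩)
        (show (xbar, b) ∈ C ×ˢ Y from ⟨hXC hxbar, hb⟩) hs ht hst
      simpa [← add_smul, hst] using this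
    have key : ∀ t : ℝ, 0 < t → t ≤ 1 →
        F xbar ((1 - t) • y' + t • z xbar) ≤ F xbar yb := by
      intro t ht ht1
      have hwY : (1 - t) • y' + t • z xbar ∈ Y :=
        hYconv hy'.1 (hzY xbar hxbar) (by linarith) ht.le (by ring)
      have hw := hfcx.2 hy'.1 (hzY xbar hxbar)
        (show (0 : ℝ) ≤ 1 - t by linarith) ht.le (by ring)
      simp only [smul_eq_mul] at hw
      have h1 := hy'.2
      rw [hzs xbar hxbar] at h1
      have h2 := hzm xbar hxbar zb hzbY
      have hlt : f xbar ((1 - t) • y' + t • z xbar) < f xbar zb + ε := by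
        nlinarith [mul_le_mul_of_nonneg_left h1 (sub_nonneg.2 ht1), mul_pos ht hε]
      have hev := (hconst f hfc _ hwY).eventually_lt (hfz.add_const ε) hlt
      refine le_of_tendsto_of_tendsto (hconst F hFc _ hwY) hFy ?_
      filter_upwards [hUX, hev] with x hx hxlt
      exact (hy x hx).2 _ ⟨hwY, by rw [hzs x hx]; exact hxlt.le⟩
    have hlim : Filter.Tendsto (fun t : ℝ => F xbar ((1 - t) • y' + t • z xbar))
        (nhdsWithin 0 (Set.Ioc 0 1)) (nhds (F xbar y')) := by
      have hc : Filter.Tendsto (fun t : ℝ => (1 - t) • y' + t • z xbar)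
          (nhdsWithin 0 (Set.Ioc 0 1)) (nhdsWithin y' Y) := by
        refine tendsto_nhdsWithin_iff.2 ⟨?_, ?_⟩
        · have : Continuous (fun t : ℝ => (1 - t) • y' + t • z xbar) := by fun_prop
          have h := this.tendsto 0
          simp only [sub_zero, one_smul, zero_smul, add_zero] at h
          exact h.mono_left nhdsWithin_le_nhds
        · filter_upwards [self_mem_nhdsWithin] with t ht
          exact hYconv hy'.1 (hzY xbar hxbar) (by linarith [ht.2]) ht.1.le (by ring)
      exact ((slice F hFc xbar hxbar) y' hy'.1).tendsto.comp hc
    have hnb : (nhdsWithin (0 : ℝ) (Set.Ioc 0 1)).NeBot := by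
      rw [nhdsWithin_Ioc_eq_nhdsGT one_pos]
      infer_instance
    refine le_of_tendsto hlim ?_
    filter_upwards [self_mem_nhdsWithin] with t ht
    exact key t ht.1 ht.2
  have hloc := hlocal yb hybR
  have hpair : Filter.Tendsto (fun x => (x, y x)) U
      (nhdsWithin (xbar, yb) {p : Eu n × Eu m | p.1 ∈ X ∧ p.2 ∈ Reps F f Y ε p.1}) := by
    refine tendsto_nhdsWithin_iff.2 ⟨?_, ?_⟩
    · exact Filter.Tendsto.prodMk_nhds (hU.trans nhdsWithin_le_nhds) hyb
    · filter_upwards [hUX] with x hx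
      exact ⟨hx, hy x hx⟩
  have hev : ∀ᶠ x in (U : Filter (Eu n)), F xbar yb ≤ F x (y x) := hpair.eventually hloc
  obtain ⟨x, ⟨hx1, hx2⟩, hx3⟩ := ((hev.and hUX).and hUlt).exists
  apply hx3
  rw [hphi xbar yb hybR, hphi x _ (hy x hx2)]
  exact hx1
end
end
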